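/- arXiv:1901.02768 — 3 statements merged into one kernel-verified Lean document; each statement's English description precedes it below -/
import Mathlib

section
/- For a given τ > 0, a vector z ∈ ℝ^p is a strong τ-stationary point of the sparsity constrained logistic regression problem if and only if either (i) ‖z‖₀ < s and ∇ℓ(z) = 0, or (ii) ‖z‖₀ = s, ∇_i ℓ(z) = 0 for every i in the support of z, and |∇_i ℓ(z)| < (1/τ) · min_{j ∈ supp(z)} |z_j| for every i not in the support of z. -/
open scoped RealInnerProductSpace BigOperators
open Matrix

/-- The number of nonzero entries of a vector (the ℓ₀ "norm"). -/
noncomputable def norm0 {p : ℕ} (z : EuclideanSpace ℝ (Fin p)) : ℕ :=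
  {i | z i ≠ 0}.ncard

/-- The Euclidean projection of `w` onto the sparse set `S = {x : ‖x‖₀ ≤ s}`:
the set of points of `S` nearest to `w`. -/
noncomputable def projS {p : ℕ} (s : ℕ) (w : EuclideanSpace ℝ (Fin p)) :
    Set (EuclideanSpace ℝ (Fin p)) :=
  {x | norm0 x ≤ s ∧ ∀ x' : EuclideanSpace ℝ (Fin p), norm0 x' ≤ s → ‖w - x‖ ≤ ‖w - x'‖}

/-!
The question is when `z` is the unique point of the sparse set nearest to `w = z - τ • ∇ℓ(z)`.
Comparing `z` with points that differ from it in one entry, or that trade an entry in its support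
for one outside, shows that the conditions are necessary. Conversely, if `w = z` on the support of
`z` and `|w i| < |z j|` for `i` outside and `j` inside it, pick `μ > 0` strictly between the numbers
`w i ^ 2` and `z j ^ 2`. Then `z` is the unique minimizer of the penalized objective
`‖w - x‖ ^ 2 + μ * ‖x‖₀`, because this objective separates over the coordinates and hard
thresholding solves each one-dimensional problem. Since `μ > 0`, any other `x` with `‖x‖₀ ≤ ‖z‖₀`
must then be strictly farther from `w`.
-/

section CoordinateUpdate

lemma norm_sub_toLp_update_sq {ι : Type*} [Fintype ι] [DecidableEq ι] (w z : EuclideanSpace ℝ ι)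
    (i : ι) (a : ℝ) :
    ‖w - WithLp.toLp 2 (Function.update z i a)‖ ^ 2 =
      ‖w - z‖ ^ 2 - (w i - z i) ^ 2 + (w i - a) ^ 2 := by
  have hrest : ∑ k ∈ Finset.univ.erase i, (w k - Function.update z i a k) ^ 2 =
      ∑ k ∈ Finset.univ.erase i, (w k - z k) ^ 2 :=
    Finset.sum_congr rfl fun k hk => by rw [Function.update_of_ne (Finset.ne_of_mem_erase hk)]
  simp only [EuclideanSpace.real_norm_sq_eq, PiLp.sub_apply]
  rw [← Finset.add_sum_erase _ _ (Finset.mem_univ i), hrest, Function.update_self,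
    ← Finset.add_sum_erase _ (fun k => (w k - z k) ^ 2) (Finset.mem_univ i)]
  ring

variable {p : ℕ} (z : EuclideanSpace ℝ (Fin p)) (i : Fin p) (a : ℝ)

lemma support_toLp_update_subset :
    {k | WithLp.toLp 2 (Function.update z i a) k ≠ 0} ⊆ insert i {k | z k ≠ 0} := by
  intro k hk
  rcases eq_or_ne k i with rfl | hki
  · exact Set.mem_insert k _
  · exact Set.mem_insert_of_mem i (by simpa [hki] using hk)

lemma norm0_toLp_update_le_succ :
    norm0 (WithLp.toLp 2 (Function.update z i a)) ≤ norm0 z + 1 :=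
  (Set.ncard_le_ncard (support_toLp_update_subset z i a)).trans (Set.ncard_insert_le _ _)

variable {z i}

lemma norm0_toLp_update_le (hi : z i ≠ 0) :
    norm0 (WithLp.toLp 2 (Function.update z i a)) ≤ norm0 z := by
  have hsupp := support_toLp_update_subset z i a
  rw [Set.insert_eq_of_mem (show i ∈ {k | z k ≠ 0} from hi)] at hsupp
  exact Set.ncard_le_ncard hsupp

lemma norm0_toLp_update_zero_add_one (hi : z i ≠ 0) :
    norm0 (WithLp.toLp 2 (Function.update z i 0)) + 1 = norm0 z := by
  have hsupp : {k | WithLp.toLp 2 (Function.update z i 0) k ≠ 0} = {k | z k ≠ 0} \ {i} :=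
    Function.support_update_zero z.ofLp i
  rw [norm0, hsupp]
  exact Set.ncard_sdiff_singleton_add_one hi

end CoordinateUpdate

section HardThresholding

lemma sq_sub_add_ite_lt_sq_sub_add_ite {a b c μ : ℝ} (hfix : b ≠ 0 → a = b)
    (hlarge : b ≠ 0 → μ < b ^ 2) (hsmall : b = 0 → a ^ 2 < μ) (hcb : c ≠ b) :
    (a - b) ^ 2 + (if b ≠ 0 then μ else 0) < (a - c) ^ 2 + (if c ≠ 0 then μ else 0) := by
  rcases eq_or_ne b 0 with rfl | hb
  · have hμ := hsmall rfl
    simp only [hcb, ne_eq, not_true_eq_false, not_false_eq_true, if_true, if_false]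
    nlinarith [sq_nonneg (a - c)]
  · obtain rfl := hfix hb
    rcases eq_or_ne c 0 with rfl | hc
    · simpa [hb] using hlarge hb
    · simpa [hb, hc] using sq_pos_of_ne_zero (sub_ne_zero.2 hcb.symm)

variable {p : ℕ} {w x z : EuclideanSpace ℝ (Fin p)}

lemma norm_sq_add_mul_norm0_eq_sum (v x : EuclideanSpace ℝ (Fin p)) (μ : ℝ) :
    ‖v‖ ^ 2 + μ * norm0 x = ∑ i, (v i ^ 2 + if x i ≠ 0 then μ else 0) := by
  rw [Finset.sum_add_distrib, ← EuclideanSpace.real_norm_sq_eq, norm0,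
    Set.ncard_eq_toFinset_card', ← Finset.sum_filter, Finset.sum_const, nsmul_eq_mul, mul_comm μ,
    Set.toFinset_ofPred]

lemma norm_sub_sq_add_mul_norm0_lt {μ : ℝ} (hfix : ∀ i, z i ≠ 0 → w i = z i)
    (hlarge : ∀ i, z i ≠ 0 → μ < z i ^ 2) (hsmall : ∀ i, z i = 0 → w i ^ 2 < μ) (hxz : x ≠ z) :
    ‖w - z‖ ^ 2 + μ * norm0 z < ‖w - x‖ ^ 2 + μ * norm0 x := by
  have hcoord : ∀ i, x i ≠ z i →
      (w i - z i) ^ 2 + (if z i ≠ 0 then μ else 0) <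
        (w i - x i) ^ 2 + (if x i ≠ 0 then μ else 0) :=
    fun i => sq_sub_add_ite_lt_sq_sub_add_ite (hfix i) (hlarge i) (hsmall i)
  obtain ⟨k, hk⟩ : ∃ k, x k ≠ z k := by
    contrapose! hxz
    exact PiLp.ext hxz
  simp only [norm_sq_add_mul_norm0_eq_sum, PiLp.sub_apply]
  refine Finset.sum_lt_sum (fun i _ => ?_) ⟨k, Finset.mem_univ k, hcoord k hk⟩
  rcases eq_or_ne (x i) (z i) with hi | hi
  · rw [hi]
  · exact (hcoord i hi).le

lemma exists_pos_sq_lt_and_lt_sq {ι : Type*} [Finite ι] {f g : ι → ℝ}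
    (h : ∀ i, g i = 0 → ∀ j, g j ≠ 0 → |f i| < |g j|) :
    ∃ μ, 0 < μ ∧ (∀ i, g i = 0 → f i ^ 2 < μ) ∧ ∀ j, g j ≠ 0 → μ < g j ^ 2 := by
  obtain ⟨μ, hlo, hhi⟩ := Set.Finite.exists_between'
    (s := insert 0 ((fun i => f i ^ 2) '' {i | g i = 0})) (t := (fun j => g j ^ 2) '' {j | g j ≠ 0})
    ((Set.toFinite _).insert 0) (Set.toFinite _) (by
      rintro _ (rfl | ⟨i, hi, rfl⟩) _ ⟨j, hj, rfl⟩
      · exact sq_pos_of_ne_zero hj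
      · exact sq_lt_sq.2 (h i hi j hj))
  exact ⟨μ, hlo 0 (Set.mem_insert 0 _),
    fun i hi => hlo _ (Set.mem_insert_of_mem 0 (Set.mem_image_of_mem _ hi)),
    fun j hj => hhi _ (Set.mem_image_of_mem _ hj)⟩

lemma norm_sub_lt_norm_sub_of_norm0_le (hfix : ∀ i, z i ≠ 0 → w i = z i)
    (hlt : ∀ i, z i = 0 → ∀ j, z j ≠ 0 → |w i| < |z j|) (hx : norm0 x ≤ norm0 z) (hxz : x ≠ z) :
    ‖w - z‖ < ‖w - x‖ := by
  obtain ⟨μ, hμ, hsmall, hlarge⟩ := exists_pos_sq_lt_and_lt_sq hlt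
  have hpenalized := norm_sub_sq_add_mul_norm0_lt hfix hlarge hsmall hxz
  have hpenalty : μ * norm0 x ≤ μ * norm0 z := by gcongr
  refine lt_of_pow_lt_pow_left₀ 2 (norm_nonneg _) ?_
  linarith

end HardThresholding

section SparseProjection

variable {p s : ℕ} {w z : EuclideanSpace ℝ (Fin p)}

lemma projS_eq_singleton_iff_forall_lt :
    projS s w = {z} ↔ norm0 z ≤ s ∧ ∀ x, norm0 x ≤ s → x ≠ z → ‖w - z‖ < ‖w - x‖ := by
  rw [Set.eq_singleton_iff_unique_mem]
  constructor
  · rintro ⟨hz, huniq⟩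
    refine ⟨hz.1, fun x hx hxz => ?_⟩
    contrapose! hxz
    exact huniq x ⟨hx, fun x' hx' => hxz.trans (hz.2 x' hx')⟩
  · rintro ⟨hz, hlt⟩
    refine ⟨⟨hz, fun x hx => ?_⟩, fun x hx => ?_⟩
    · rcases eq_or_ne x z with rfl | hxz
      · exact le_rfl
      · exact (hlt x hx hxz).le
    · by_contra hxz
      exact (hlt x hx.1 hxz).not_ge (hx.2 z hz)

lemma projS_eq_singleton_self (hw : norm0 w ≤ s) : projS s w = {w} :=
  projS_eq_singleton_iff_forall_lt.2 ⟨hw, fun x _ hxw => by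
    simpa [sub_eq_zero] using hxw.symm⟩

lemma eq_of_projS_eq_singleton (h : projS s w = {z}) {x : EuclideanSpace ℝ (Fin p)}
    (hx : norm0 x ≤ s) (hle : ‖w - x‖ ^ 2 ≤ ‖w - z‖ ^ 2) : x = z := by
  by_contra hxz
  have hlt := (projS_eq_singleton_iff_forall_lt.1 h).2 x hx hxz
  exact hlt.not_ge (le_of_sq_le_sq hle (norm_nonneg _))

lemma apply_eq_of_projS_eq_singleton (h : projS s w = {z}) {i : Fin p}
    (hi : norm0 (WithLp.toLp 2 (Function.update z i (w i))) ≤ s) : w i = z i := by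
  have hupdate : WithLp.toLp 2 (Function.update z i (w i)) = z := by
    refine eq_of_projS_eq_singleton h hi ?_
    rw [norm_sub_toLp_update_sq]
    linarith [sq_nonneg (w i - z i)]
  simpa using congr($hupdate i)

lemma apply_eq_of_projS_eq_singleton_of_ne_zero (h : projS s w = {z}) {i : Fin p}
    (hi : z i ≠ 0) : w i = z i :=
  apply_eq_of_projS_eq_singleton h <|
    (norm0_toLp_update_le (w i) hi).trans (projS_eq_singleton_iff_forall_lt.1 h).1

lemma eq_of_projS_eq_singleton_of_norm0_lt (h : projS s w = {z}) (hz : norm0 z < s) : w = z :=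
  PiLp.ext fun i => apply_eq_of_projS_eq_singleton h <|
    (norm0_toLp_update_le_succ z i (w i)).trans hz

lemma abs_lt_abs_of_projS_eq_singleton (h : projS s w = {z}) {i j : Fin p}
    (hi : z i = 0) (hj : z j ≠ 0) : |w i| < |z j| := by
  have hij : i ≠ j := by
    rintro rfl
    exact hj hi
  have hwj : w j = z j := apply_eq_of_projS_eq_singleton_of_ne_zero h hj
  by_contra! hle
  have hsq : z j ^ 2 ≤ w i ^ 2 := sq_le_sq.2 hle
  let dropped : EuclideanSpace ℝ (Fin p) := WithLp.toLp 2 (Function.update z j 0)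
  have hdropped : dropped i = 0 := by simp [dropped, hij, hi]
  let swapped : EuclideanSpace ℝ (Fin p) := WithLp.toLp 2 (Function.update dropped i (w i))
  have hsparse : norm0 swapped ≤ s :=
    calc norm0 swapped ≤ norm0 dropped + 1 := norm0_toLp_update_le_succ dropped i (w i)
      _ = norm0 z := norm0_toLp_update_zero_add_one hj
      _ ≤ s := (projS_eq_singleton_iff_forall_lt.1 h).1
  have hclose : ‖w - swapped‖ ^ 2 ≤ ‖w - z‖ ^ 2 :=
    calc ‖w - swapped‖ ^ 2 = ‖w - dropped‖ ^ 2 - w i ^ 2 := by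
          rw [norm_sub_toLp_update_sq, hdropped]; ring
      _ = ‖w - z‖ ^ 2 + z j ^ 2 - w i ^ 2 := by
          rw [norm_sub_toLp_update_sq, hwj]; ring
      _ ≤ ‖w - z‖ ^ 2 := by linarith
  have hswapped : swapped = z := eq_of_projS_eq_singleton h hsparse hclose
  have hzj : 0 = z j := by simpa [swapped, dropped, hij.symm] using congr($hswapped j)
  exact hj hzj.symm

theorem projS_eq_singleton_iff : projS s w = {z} ↔
    (norm0 z < s ∧ w = z) ∨
    (norm0 z = s ∧ (∀ i, z i ≠ 0 → w i = z i) ∧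
      ∀ i, z i = 0 → ∀ j, z j ≠ 0 → |w i| < |z j|) := by
  constructor
  · intro h
    rcases (projS_eq_singleton_iff_forall_lt.1 h).1.lt_or_eq with hlt | heq
    · exact Or.inl ⟨hlt, eq_of_projS_eq_singleton_of_norm0_lt h hlt⟩
    · exact Or.inr ⟨heq, fun i => apply_eq_of_projS_eq_singleton_of_ne_zero h,
        fun i hi j hj => abs_lt_abs_of_projS_eq_singleton h hi hj⟩
  · rintro (⟨hlt, rfl⟩ | ⟨rfl, hfix, hlt⟩)
    · exact projS_eq_singleton_self hlt.le
    · exact projS_eq_singleton_iff_forall_lt.2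
        ⟨le_rfl, fun x => norm_sub_lt_norm_sub_of_norm0_le hfix hlt⟩

end SparseProjection

lemma lt_sInf_abs_iff {ι : Type*} [Finite ι] {f : ι → ℝ} (hf : {j | f j ≠ 0}.Nonempty) {a : ℝ} :
    a < sInf {r : ℝ | ∃ j, f j ≠ 0 ∧ r = |f j|} ↔ ∀ j, f j ≠ 0 → a < |f j| := by
  have himage : {r : ℝ | ∃ j, f j ≠ 0 ∧ r = |f j|} = (fun j => |f j|) '' {j | f j ≠ 0} := by
    ext r
    simp only [Set.mem_ofPred_eq, Set.mem_image, eq_comm]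
  rw [himage, ((Set.toFinite _).image _).lt_csInf_iff (hf.image _),
    Set.forall_mem_image]
  rfl

theorem strong_stationary_iff_general {p s : ℕ} (hs : 0 < s) {τ : ℝ} (hτ : 0 < τ)
    (z g : EuclideanSpace ℝ (Fin p)) :
    projS s (z - τ • g) = {z} ↔
      (norm0 z < s ∧ g = 0) ∨
      (norm0 z = s ∧ (∀ i, z i ≠ 0 → g i = 0) ∧
        ∀ i, z i = 0 → |g i| < (1 / τ) * sInf {r : ℝ | ∃ j, z j ≠ 0 ∧ r = |z j|}) := by
  have hstep : ∀ i, (z - τ • g) i = z i - τ * g i := fun i => by simp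
  have habs : ∀ i, z i = 0 → |(z - τ • g) i| = τ * |g i| := fun i hi => by
    rw [hstep, hi, zero_sub, abs_neg, abs_mul, abs_of_pos hτ]
  rw [projS_eq_singleton_iff]
  refine or_congr (and_congr_right fun _ => ?_)
    (and_congr_right fun hzs =>
      and_congr (forall₂_congr fun i _ => ?_) (forall₂_congr fun i hi => ?_))
  · rw [sub_eq_self, smul_eq_zero_iff_right hτ.ne']
  · rw [hstep, sub_eq_self, mul_eq_zero_iff_left hτ.ne']
  · have hsupp : {j | z j ≠ 0}.Nonempty := Set.nonempty_of_ncard_ne_zero (hs.trans_eq hzs.symm).ne'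
    rw [habs i hi, one_div, lt_inv_mul_iff₀ hτ, lt_sInf_abs_iff hsupp]

/-- `z` is a strong τ-stationary point iff either `‖z‖₀ < s` and
`∇ℓ(z) = 0`, or `‖z‖₀ = s`, `∇ᵢℓ(z) = 0` on the support of `z`, and
`|∇ᵢℓ(z)| < (1/τ)·min_{j ∈ supp z} |z_j|` off the support. -/
theorem strong_stationary_iff (n p s : ℕ) (hn : 0 < n) (hs : 0 < s) (hsp : s < p)
    (X : Matrix (Fin n) (Fin p) ℝ) (y : Fin n → ℝ)
    (hy : ∀ i, y i = 0 ∨ y i = 1)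
    (ℓ : EuclideanSpace ℝ (Fin p) → ℝ)
    (hℓ : ∀ z, ℓ z = (1 / (n : ℝ)) *
      ∑ i, (Real.log (1 + Real.exp (∑ j, X i j * z j)) - y i * (∑ j, X i j * z j)))
    (τ : ℝ) (hτ : 0 < τ) (z : EuclideanSpace ℝ (Fin p)) :
    projS s (z - τ • gradient ℓ z) = {z} ↔
      (norm0 z < s ∧ gradient ℓ z = 0) ∨
      (norm0 z = s ∧ (∀ i, z i ≠ 0 → gradient ℓ z i = 0) ∧
        ∀ i, z i = 0 →
          |gradient ℓ z i| < (1 / τ) * sInf {r : ℝ | ∃ j, z j ≠ 0 ∧ r = |z j|}) :=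
  strong_stationary_iff_general hs hτ z (gradient ℓ z)
end

section
/- Let z be a strong τ-stationary point (for some τ > 0) with ‖z‖₀ = s, and let 0 < τ₁ ≤ τ. Then supp(z) is the unique index set of cardinality s containing the s largest absolute entries of z − τ₁∇ℓ(z): for every i ∈ supp(z) and every j ∉ supp(z), |z_i − τ₁ ∇_i ℓ(z)| > |z_j − τ₁ ∇_j ℓ(z)|. -/
open scoped RealInnerProductSpace BigOperators
open Matrix

/-!
Replacing an entry of `z` on its support by that of `w` keeps `z` sparse and brings it strictly
closer to `w` unless the two entries agree, so a nearest sparse point `z` agrees with `w` on its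
support. Trading entry `z i` on the support for an entry `w j` off the support then changes the
squared distance to `w` by `z i ^ 2 - w j ^ 2`, which uniqueness of the projection forces to be
positive. For `w = z - τ ∇ℓ(z)` this says that `∇ℓ(z)` vanishes on the support and that
`τ |∇ℓ(z) j| < |z i|` for `j` off it; both survive shrinking `τ`.
-/

theorem norm_sub_single_self_sq_add {ι : Type*} [Fintype ι] [DecidableEq ι] {β : ι → Type*}
    [∀ k, SeminormedAddCommGroup (β k)] (v : PiLp 2 β) (i : ι) :
    ‖v - PiLp.single 2 i (v i)‖ ^ 2 + ‖v i‖ ^ 2 = ‖v‖ ^ 2 := by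
  have hsum : ∑ k ∈ Finset.univ.erase i, ‖(v - PiLp.single 2 i (v i)) k‖ ^ 2 =
      ∑ k ∈ Finset.univ.erase i, ‖v k‖ ^ 2 :=
    Finset.sum_congr rfl fun k hk => by simp [Finset.ne_of_mem_erase hk]
  rw [PiLp.norm_sq_eq_of_L2, PiLp.norm_sq_eq_of_L2,
    ← Finset.sum_erase_add _ _ (Finset.mem_univ i), hsum,
    ← Finset.sum_erase_add _ (fun k => ‖v k‖ ^ 2) (Finset.mem_univ i)]
  simp

section Sparsity

variable {p : ℕ} {z : EuclideanSpace ℝ (Fin p)} {i : Fin p}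

theorem norm0_add_single_le (z : EuclideanSpace ℝ (Fin p)) (i : Fin p) (a : ℝ) :
    norm0 (z + EuclideanSpace.single i a) ≤ norm0 z + 1 := by
  have hsub : {k | (z + EuclideanSpace.single i a) k ≠ 0} ⊆ insert i {k | z k ≠ 0} := by
    intro k hk
    by_cases hki : k = i
    · exact Or.inl hki
    · exact Or.inr (by simpa [hki] using hk)
  exact (Set.ncard_le_ncard hsub).trans (Set.ncard_insert_le _ _)

theorem norm0_add_single_le_of_ne_zero (hi : z i ≠ 0) (a : ℝ) :
    norm0 (z + EuclideanSpace.single i a) ≤ norm0 z := by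
  refine Set.ncard_le_ncard fun k hk => ?_
  by_cases hki : k = i
  · exact hki ▸ hi
  · simpa [hki] using hk

theorem norm0_sub_single_self_add_one (hi : z i ≠ 0) :
    norm0 (z - EuclideanSpace.single i (z i)) + 1 = norm0 z := by
  have hsupp : {k | (z - EuclideanSpace.single i (z i)) k ≠ 0} = {k | z k ≠ 0} \ {i} := by
    ext k
    by_cases hki : k = i
    · simp [hki]
    · simp [hki]
  rw [norm0, hsupp, Set.ncard_sdiff_singleton_add_one hi, norm0]

end Sparsity

section Projection

variable {p s : ℕ} {w z x : EuclideanSpace ℝ (Fin p)} {i j : Fin p}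

theorem norm_sub_lt_of_projS_eq_singleton (h : projS s w = {z}) (hx : norm0 x ≤ s)
    (hxz : x ≠ z) : ‖w - z‖ < ‖w - x‖ := by
  by_contra! hle
  have hz : z ∈ projS s w := h ▸ Set.mem_singleton z
  have hxmem : x ∈ projS s w := ⟨hx, fun x' hx' => hle.trans (hz.2 x' hx')⟩
  exact hxz (by simpa [h] using hxmem)

theorem apply_eq_of_mem_projS (hz : z ∈ projS s w) (hi : z i ≠ 0) : w i = z i := by
  have hle : ‖w - z‖ ≤ ‖w - z - EuclideanSpace.single i ((w - z) i)‖ := by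
    rw [sub_sub]
    exact hz.2 _ ((norm0_add_single_le_of_ne_zero hi _).trans hz.1)
  have hpyth := norm_sub_single_self_sq_add (w - z) i
  have hzero : ‖(w - z) i‖ ^ 2 ≤ 0 := by
    linarith [pow_le_pow_left₀ (norm_nonneg _) hle 2]
  have hdiff : (w - z) i = 0 := by simpa using hzero.antisymm (sq_nonneg _)
  exact sub_eq_zero.mp hdiff

theorem abs_lt_of_projS_eq_singleton (h : projS s w = {z}) (hi : z i ≠ 0) (hj : z j = 0) :
    |w j| < |z i| := by
  have hz : z ∈ projS s w := h ▸ Set.mem_singleton z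
  have hji : j ≠ i := fun hji => hi (hji ▸ hj)
  -- Since `w i = z i`, both `z` and its competitor `x` are `y` with one restored entry of `w`.
  let y := z - EuclideanSpace.single i (z i)
  let x := y + EuclideanSpace.single j (w j)
  have hyi : y i = 0 := by simp [y]
  have hyj : y j = 0 := by simp [y, hj, hji]
  have hx : norm0 x ≤ s :=
    calc norm0 x ≤ norm0 y + 1 := norm0_add_single_le y j (w j)
      _ = norm0 z := norm0_sub_single_self_add_one hi
      _ ≤ s := hz.1
  have hxz : x ≠ z := fun hxz => hi (by simp [← hxz, x, hyi, hji.symm])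
  have hz_eq : z = y + EuclideanSpace.single i (w i) := by
    rw [apply_eq_of_mem_projS hz hi, sub_add_cancel]
  have hdist_z : ‖w - z‖ ^ 2 + w i ^ 2 = ‖w - y‖ ^ 2 := by
    rw [hz_eq]
    simpa [hyi, sub_sub] using norm_sub_single_self_sq_add (w - y) i
  have hdist_x : ‖w - x‖ ^ 2 + w j ^ 2 = ‖w - y‖ ^ 2 := by
    simpa [hyj, x, sub_sub] using norm_sub_single_self_sq_add (w - y) j
  have hlt : ‖w - z‖ ^ 2 < ‖w - x‖ ^ 2 :=
    pow_lt_pow_left₀ (norm_sub_lt_of_projS_eq_singleton h hx hxz) (norm_nonneg _) two_ne_zero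
  rw [← apply_eq_of_mem_projS hz hi]
  exact sq_lt_sq.mp (by linarith)

end Projection

theorem strong_stationary_support_dominates_general {p s : ℕ} {τ τ₁ : ℝ} (hττ₁ : |τ₁| ≤ |τ|)
    {z g : EuclideanSpace ℝ (Fin p)} (hstat : projS s (z - τ • g) = {z})
    {i j : Fin p} (hi : z i ≠ 0) (hj : z j = 0) :
    |z j - τ₁ * g j| < |z i - τ₁ * g i| := by
  have hmul (k : Fin p) : |τ₁ * g k| ≤ |τ * g k| := by
    simpa only [abs_mul] using mul_le_mul_of_nonneg_right hττ₁ (abs_nonneg (g k))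
  have hfix : z i - τ * g i = z i := apply_eq_of_mem_projS (hstat ▸ Set.mem_singleton z) hi
  have hτgi : τ * g i = 0 := sub_eq_self.mp hfix
  have hτ₁gi : τ₁ * g i = 0 := by
    rw [← abs_nonpos_iff]
    exact (hmul i).trans_eq (by rw [hτgi, abs_zero])
  calc |z j - τ₁ * g j| = |τ₁ * g j| := by rw [hj, zero_sub, abs_neg]
    _ ≤ |τ * g j| := hmul j
    _ < |z i| := by simpa [hj] using abs_lt_of_projS_eq_singleton hstat hi hj
    _ = |z i - τ₁ * g i| := by rw [hτ₁gi, sub_zero]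

/-- if `z` is a strong τ-stationary point with `‖z‖₀ = s` and
`0 < τ₁ ≤ τ`, then the entries of `z − τ₁∇ℓ(z)` on the support of `z` strictly
dominate those off the support: for every `i ∈ supp(z)` and `j ∉ supp(z)`,
`|zᵢ − τ₁∇ᵢℓ(z)| > |z_j − τ₁∇_jℓ(z)|`, so `supp(z)` is the unique index set of
cardinality `s` carrying the `s` largest absolute entries of `z − τ₁∇ℓ(z)`. -/
theorem strong_stationary_support_dominates (n p s : ℕ)
    (hn : 0 < n) (hs : 0 < s) (hsp : s < p)
    (X : Matrix (Fin n) (Fin p) ℝ) (y : Fin n → ℝ)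
    (hy : ∀ i, y i = 0 ∨ y i = 1)
    (ℓ : EuclideanSpace ℝ (Fin p) → ℝ)
    (hℓ : ∀ z, ℓ z = (1 / (n : ℝ)) *
      ∑ i, (Real.log (1 + Real.exp (∑ j, X i j * z j)) - y i * (∑ j, X i j * z j)))
    (τ τ₁ : ℝ) (hτ : 0 < τ) (hτ₁ : 0 < τ₁) (hττ₁ : τ₁ ≤ τ)
    (z : EuclideanSpace ℝ (Fin p))
    (hstat : projS s (z - τ • gradient ℓ z) = {z})
    (hcard : norm0 z = s) :
    ∀ i, z i ≠ 0 → ∀ j, z j = 0 →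
      |z j - τ₁ * gradient ℓ z j| < |z i - τ₁ * gradient ℓ z i| :=
  fun _ hi _ hj => strong_stationary_support_dominates_general
    (abs_le_abs_of_nonneg hτ₁.le hττ₁) hstat hi hj
end

section
/- Fix τ > 0, let z ∈ ℝ^p, and set d = ∇ℓ(z). Then z is a strong τ-stationary point if and only if for every index set T ⊆ {1,…,p} with |T| = s such that min_{i ∈ T} |z_i − τ d_i| ≥ max_{j ∉ T} |z_j − τ d_j| (i.e., T collects s entries of z − τd of largest absolute value), one has d_i = 0 for all i ∈ T and z_j = 0 for all j ∉ T. -/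
open scoped RealInnerProductSpace BigOperators
open Matrix

/-! The `s`-sparse vectors form the union of the coordinate subspaces of dimension `s`. Inside the
subspace of an index set `T` the point nearest to `w` is the truncation of `w` to `T`, at squared
distance `‖w‖² - ∑_{i ∈ T} |wᵢ|²`. So the nearest sparse points are the truncations of `w` to the
`T` maximizing this sum, which by an exchange argument are those collecting `s` largest entries.
Stationarity asks all these truncations of `w = z - τd` to equal `z`, which can be read off
coordinate by coordinate. -/

section TopSubset

variable {ι α : Type*}

/-- `T` collects entries of the family `f` of largest value: no entry outside `T` exceeds one
inside. In case of ties, several sets of the same cardinality may qualify. -/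
def IsTopSubset [LE α] (f : ι → α) (T : Finset ι) : Prop :=
  ∀ i ∈ T, ∀ j ∉ T, f j ≤ f i

lemma exists_card_eq_isTopSubset [Fintype ι] [LinearOrder α] (f : ι → α) {s : ℕ}
    (hs : s ≤ Fintype.card ι) : ∃ T : Finset ι, T.card = s ∧ IsTopSubset f T := by
  classical
  induction s with
  | zero => exact ⟨∅, Finset.card_empty, fun i hi => absurd hi (Finset.notMem_empty i)⟩
  | succ s ih =>
    obtain ⟨T, rfl, hT⟩ := ih (Nat.le_of_succ_le hs)
    have hne : Tᶜ.Nonempty := by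
      rw [← Finset.card_pos, Finset.card_compl]
      lia
    obtain ⟨k, hk, hmax⟩ := Finset.exists_max_image Tᶜ f hne
    refine ⟨insert k T, Finset.card_insert_of_notMem (Finset.mem_compl.1 hk), fun i hi j hj => ?_⟩
    have hjT : j ∉ T := fun h => hj (Finset.mem_insert_of_mem h)
    rcases Finset.mem_insert.1 hi with rfl | hiT
    · exact hmax j (Finset.mem_compl.2 hjT)
    · exact hT i hiT j hjT

variable [AddCommMonoid α] [LinearOrder α] [IsOrderedCancelAddMonoid α]

lemma IsTopSubset.sum_le_sum {f : ι → α} {T T' : Finset ι} (hT : IsTopSubset f T)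
    (hcard : T'.card = T.card) : ∑ i ∈ T', f i ≤ ∑ i ∈ T, f i := by
  classical
  rw [← Finset.sum_sdiff_le_sum_sdiff]
  have hcard' : (T' \ T).card = (T \ T').card := Finset.card_sdiff_comm hcard
  rcases (T' \ T).eq_empty_or_nonempty with h | h
  · rw [h, Finset.card_empty, eq_comm, Finset.card_eq_zero] at hcard'
    rw [h, hcard']
  · obtain ⟨k, hk, hmax⟩ := Finset.exists_max_image (T' \ T) f h
    calc ∑ i ∈ T' \ T, f i ≤ (T' \ T).card • f k := Finset.sum_le_card_nsmul _ _ _ hmax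
      _ = (T \ T').card • f k := by rw [hcard']
      _ ≤ ∑ i ∈ T \ T', f i := Finset.card_nsmul_le_sum _ _ _ fun i hi =>
          hT i (Finset.mem_sdiff.1 hi).1 k (Finset.mem_sdiff.1 hk).2

lemma isTopSubset_iff_forall_sum_le_sum {f : ι → α} {T : Finset ι} :
    IsTopSubset f T ↔ ∀ T' : Finset ι, T'.card = T.card → ∑ i ∈ T', f i ≤ ∑ i ∈ T, f i := by
  classical
  refine ⟨fun hT T' => hT.sum_le_sum, fun hT i hi j hj => ?_⟩
  -- Exchanging `i` for `j` must not increase the sum.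
  have hj' : j ∉ T.erase i := fun h => hj (Finset.mem_of_mem_erase h)
  have hswap := hT (insert j (T.erase i)) <| by
    rw [Finset.card_insert_of_notMem hj', Finset.card_erase_add_one hi]
  rw [Finset.sum_insert hj', ← Finset.add_sum_erase T f hi] at hswap
  exact le_of_add_le_add_right hswap

end TopSubset

section Truncate

variable {𝕜 ι : Type*}

/-- The orthogonal projection of `w` onto the coordinate subspace of vectors supported in `T`,
given by its entries rather than as a linear map. -/
noncomputable def truncate [Zero 𝕜] (T : Finset ι) (w : EuclideanSpace 𝕜 ι) :
    EuclideanSpace 𝕜 ι :=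
  WithLp.toLp 2 (Set.indicator T w)

lemma truncate_apply_of_mem [Zero 𝕜] {T : Finset ι} {i : ι} (hi : i ∈ T)
    (w : EuclideanSpace 𝕜 ι) : truncate T w i = w i :=
  Set.indicator_of_mem (Finset.mem_coe.2 hi) _

lemma truncate_apply_of_notMem [Zero 𝕜] {T : Finset ι} {i : ι} (hi : i ∉ T)
    (w : EuclideanSpace 𝕜 ι) : truncate T w i = 0 :=
  Set.indicator_of_notMem (mt Finset.mem_coe.1 hi) _

lemma truncate_eq_iff [Zero 𝕜] {T : Finset ι} {w x : EuclideanSpace 𝕜 ι} :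
    truncate T w = x ↔ (∀ i ∈ T, w i = x i) ∧ ∀ i ∉ T, x i = 0 := by
  constructor
  · rintro rfl
    exact ⟨fun i hi => (truncate_apply_of_mem hi w).symm, fun i hi => truncate_apply_of_notMem hi w⟩
  · rintro ⟨hmem, hnotMem⟩
    ext i
    by_cases hi : i ∈ T
    · rw [truncate_apply_of_mem hi, hmem i hi]
    · rw [truncate_apply_of_notMem hi, hnotMem i hi]

lemma truncate_sub_smul_eq_self_iff [Ring 𝕜] [NoZeroDivisors 𝕜] {τ : 𝕜} (hτ : τ ≠ 0)
    {T : Finset ι} {z d : EuclideanSpace 𝕜 ι} :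
    truncate T (z - τ • d) = z ↔ (∀ i ∈ T, d i = 0) ∧ ∀ j ∉ T, z j = 0 := by
  have hstep (i : ι) : (z - τ • d) i = z i ↔ d i = 0 := by
    rw [WithLp.ofLp_sub, WithLp.ofLp_smul, Pi.sub_apply, Pi.smul_apply, sub_eq_self, smul_eq_mul,
      mul_eq_zero, or_iff_right hτ]
  simp only [truncate_eq_iff, hstep]

variable [RCLike 𝕜] [Fintype ι]

lemma norm_sub_sq_eq_norm_sub_truncate_sq_add {T : Finset ι} {x : EuclideanSpace 𝕜 ι}
    (hx : ∀ i ∉ T, x i = 0) (w : EuclideanSpace 𝕜 ι) :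
    ‖w - x‖ ^ 2 = ‖w - truncate T w‖ ^ 2 + ‖truncate T w - x‖ ^ 2 := by
  simp only [EuclideanSpace.norm_sq_eq, PiLp.sub_apply, ← Finset.sum_add_distrib]
  refine Finset.sum_congr rfl fun i _ => ?_
  by_cases hi : i ∈ T
  · simp [truncate_apply_of_mem hi]
  · simp [truncate_apply_of_notMem hi, hx i hi]

lemma norm_truncate_sq (T : Finset ι) (w : EuclideanSpace 𝕜 ι) :
    ‖truncate T w‖ ^ 2 = ∑ i ∈ T, ‖w i‖ ^ 2 := by
  rw [EuclideanSpace.norm_sq_eq, ← Finset.sum_subset T.subset_univ fun i _ hi => by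
    rw [truncate_apply_of_notMem hi, norm_zero, zero_pow two_ne_zero]]
  exact Finset.sum_congr rfl fun i hi => by rw [truncate_apply_of_mem hi]

lemma norm_sub_truncate_sq (T : Finset ι) (w : EuclideanSpace 𝕜 ι) :
    ‖w - truncate T w‖ ^ 2 = ‖w‖ ^ 2 - ∑ i ∈ T, ‖w i‖ ^ 2 := by
  have hpyth := norm_sub_sq_eq_norm_sub_truncate_sq_add (T := T) (x := 0) (fun _ _ => rfl) w
  rw [sub_zero, sub_zero, norm_truncate_sq] at hpyth
  exact eq_sub_of_add_eq hpyth.symm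

lemma norm_sub_truncate_le {T : Finset ι} {x : EuclideanSpace 𝕜 ι} (hx : ∀ i ∉ T, x i = 0)
    (w : EuclideanSpace 𝕜 ι) : ‖w - truncate T w‖ ≤ ‖w - x‖ := by
  rw [← sq_le_sq₀ (norm_nonneg _) (norm_nonneg _), norm_sub_sq_eq_norm_sub_truncate_sq_add hx]
  exact le_add_of_nonneg_right (sq_nonneg _)

lemma eq_truncate_of_norm_sub_le {T : Finset ι} {w x : EuclideanSpace 𝕜 ι}
    (hx : ∀ i ∉ T, x i = 0) (hle : ‖w - x‖ ≤ ‖w - truncate T w‖) : x = truncate T w := by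
  rw [← sq_le_sq₀ (norm_nonneg _) (norm_nonneg _), norm_sub_sq_eq_norm_sub_truncate_sq_add hx,
    add_le_iff_nonpos_right, sq_nonpos_iff, norm_sub_eq_zero_iff] at hle
  exact hle.symm

lemma isTopSubset_norm_iff_forall_norm_sub_truncate_le {w : EuclideanSpace 𝕜 ι} {T : Finset ι} :
    IsTopSubset (fun i => ‖w i‖) T ↔
      ∀ T' : Finset ι, T'.card = T.card → ‖w - truncate T w‖ ≤ ‖w - truncate T' w‖ := by
  have hsq : IsTopSubset (fun i => ‖w i‖) T ↔ IsTopSubset (fun i => ‖w i‖ ^ 2) T := by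
    simp only [IsTopSubset, sq_le_sq₀ (norm_nonneg _) (norm_nonneg _)]
  simp only [hsq, isTopSubset_iff_forall_sum_le_sum, ← sq_le_sq₀ (norm_nonneg (w - _))
    (norm_nonneg _), norm_sub_truncate_sq, sub_le_sub_iff_left]

end Truncate

section SparseProjection

variable {p s : ℕ} {w x z : EuclideanSpace ℝ (Fin p)}

lemma norm0_le_card {T : Finset (Fin p)} (hx : ∀ i ∉ T, x i = 0) : norm0 x ≤ T.card := by
  rw [norm0, ← Set.ncard_coe_finset T]
  exact Set.ncard_le_ncard (fun i hi => not_imp_comm.1 (hx i) hi) T.finite_toSet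

lemma norm0_truncate_le_card (T : Finset (Fin p)) (w : EuclideanSpace ℝ (Fin p)) :
    norm0 (truncate T w) ≤ T.card :=
  norm0_le_card fun _ hi => truncate_apply_of_notMem hi w

lemma exists_card_eq_of_norm0_le (hsp : s ≤ p) (hx : norm0 x ≤ s) :
    ∃ T : Finset (Fin p), T.card = s ∧ ∀ i ∉ T, x i = 0 := by
  have hcard : (Finset.univ.filter fun i => x i ≠ 0).card ≤ s := by
    simpa [norm0, ← Set.ncard_coe_finset] using hx
  obtain ⟨T, hT, hTs⟩ := Finset.exists_superset_card_eq hcard (by simpa using hsp)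
  exact ⟨T, hTs, fun i => not_imp_comm.1 fun hi => hT (by simpa using hi)⟩

lemma mem_projS_iff_exists_truncate_eq (hsp : s ≤ p) :
    x ∈ projS s w ↔
      ∃ T : Finset (Fin p), T.card = s ∧ IsTopSubset (fun i => ‖w i‖) T ∧ truncate T w = x := by
  constructor
  · rintro ⟨hx, hmin⟩
    obtain ⟨T, rfl, hxT⟩ := exists_card_eq_of_norm0_le hsp hx
    obtain rfl : x = truncate T w :=
      eq_truncate_of_norm_sub_le hxT (hmin _ (norm0_truncate_le_card T w))
    refine ⟨T, rfl, isTopSubset_norm_iff_forall_norm_sub_truncate_le.2 fun T' hT' => ?_, rfl⟩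
    exact hmin _ ((norm0_truncate_le_card T' w).trans_eq hT')
  · rintro ⟨T, rfl, hT, rfl⟩
    refine ⟨norm0_truncate_le_card T w, fun x' hx' => ?_⟩
    obtain ⟨T', hT', hxT'⟩ := exists_card_eq_of_norm0_le hsp hx'
    calc ‖w - truncate T w‖ ≤ ‖w - truncate T' w‖ :=
          isTopSubset_norm_iff_forall_norm_sub_truncate_le.1 hT T' hT'
      _ ≤ ‖w - x'‖ := norm_sub_truncate_le hxT' w

lemma projS_nonempty (hsp : s ≤ p) (w : EuclideanSpace ℝ (Fin p)) : (projS s w).Nonempty := by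
  obtain ⟨T, hTs, hT⟩ :=
    exists_card_eq_isTopSubset (fun i => ‖w i‖) (hsp.trans_eq (Fintype.card_fin p).symm)
  exact ⟨truncate T w, (mem_projS_iff_exists_truncate_eq hsp).2 ⟨T, hTs, hT, rfl⟩⟩

lemma projS_eq_singleton_iff_forall_truncate_eq (hsp : s ≤ p) :
    projS s w = {z} ↔
      ∀ T : Finset (Fin p), T.card = s → IsTopSubset (fun i => ‖w i‖) T → truncate T w = z := by
  simp only [Set.eq_singleton_iff_nonempty_unique_mem, projS_nonempty hsp w, true_and,
    mem_projS_iff_exists_truncate_eq hsp]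
  exact ⟨fun h T hTs hT => h _ ⟨T, hTs, hT, rfl⟩,
    fun h _ ⟨T, hTs, hT, hx⟩ => hx ▸ h T hTs hT⟩

end SparseProjection

theorem strong_stationary_iff_stationary_equation_general {p s : ℕ} (hsp : s ≤ p)
    {τ : ℝ} (hτ : τ ≠ 0) (z d : EuclideanSpace ℝ (Fin p)) :
    projS s (z - τ • d) = {z} ↔
      ∀ T : Finset (Fin p), T.card = s →
        (∀ i ∈ T, ∀ j ∉ T, |z j - τ * d j| ≤ |z i - τ * d i|) →
        (∀ i ∈ T, d i = 0) ∧ (∀ j ∉ T, z j = 0) := by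
  simp only [projS_eq_singleton_iff_forall_truncate_eq hsp, truncate_sub_smul_eq_self_iff hτ,
    IsTopSubset, PiLp.sub_apply, PiLp.smul_apply, smul_eq_mul, Real.norm_eq_abs]

/-- with `d = ∇ℓ(z)`, `z` is a strong τ-stationary point iff for
every index set `T` of cardinality `s` collecting `s` entries of `z − τd` of
largest absolute value, one has `dᵢ = 0` for `i ∈ T` and `z_j = 0` for `j ∉ T`
(the stationary equation `F_τ(u; T) = 0`). -/
theorem strong_stationary_iff_stationary_equation (n p s : ℕ)
    (hn : 0 < n) (hs : 0 < s) (hsp : s < p)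
    (X : Matrix (Fin n) (Fin p) ℝ) (y : Fin n → ℝ)
    (hy : ∀ i, y i = 0 ∨ y i = 1)
    (ℓ : EuclideanSpace ℝ (Fin p) → ℝ)
    (hℓ : ∀ z, ℓ z = (1 / (n : ℝ)) *
      ∑ i, (Real.log (1 + Real.exp (∑ j, X i j * z j)) - y i * (∑ j, X i j * z j)))
    (τ : ℝ) (hτ : 0 < τ) (z : EuclideanSpace ℝ (Fin p))
    (d : EuclideanSpace ℝ (Fin p)) (hd : d = gradient ℓ z) :
    projS s (z - τ • d) = {z} ↔
      ∀ T : Finset (Fin p), T.card = s →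
        (∀ i ∈ T, ∀ j ∉ T, |z j - τ * d j| ≤ |z i - τ * d i|) →
        (∀ i ∈ T, d i = 0) ∧ (∀ j ∉ T, z j = 0) :=
  strong_stationary_iff_stationary_equation_general hsp.le hτ.ne' z d
end
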